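/- Let ψ be smooth on ℝ² with |∇ψ(x)| ≤ P₁ and operator norm of the Hessian ‖Hess ψ(x)‖ ≤ P₂ for all x, for some constants P₁, P₂ ≥ 0. Let γ: ℝ × [0,T) → ℝ² evolve by ψMCF. If k_ψ(u,0) ≥ P₁ + √P₂ for every u, then k_ψ(u,t) ≥ P₁ + √P₂ for every (u,t) ∈ ℝ × [0,T); i.e., the lower bound C = P₁ + √P₂ on the ψ-curvature is preserved by the flow. -/

import Mathlib

noncomputable section
open Real Set

def dot2 (v w : ℝ × ℝ) : ℝ := v.1 * w.1 + v.2 * w.2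

def nrm2 (v : ℝ × ℝ) : ℝ := Real.sqrt (v.1 ^ 2 + v.2 ^ 2)

def Jrot (v : ℝ × ℝ) : ℝ × ℝ := (-v.2, v.1)

structure IsClosedCurve (γ : ℝ → ℝ × ℝ) : Prop where
  smooth : ContDiff ℝ (⊤ : ℕ∞) γ
  periodic : Function.Periodic γ (2 * π)
  regular : ∀ u, deriv γ u ≠ 0

def tangentC (γ : ℝ → ℝ × ℝ) (u : ℝ) : ℝ × ℝ := (nrm2 (deriv γ u))⁻¹ • deriv γ u

def normalC (γ : ℝ → ℝ × ℝ) (u : ℝ) : ℝ × ℝ := Jrot (tangentC γ u)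

def arcDeriv {F : Type*} [NormedAddCommGroup F] [NormedSpace ℝ F]
    (γ : ℝ → ℝ × ℝ) (h : ℝ → F) (u : ℝ) : F :=
  (nrm2 (deriv γ u))⁻¹ • deriv h u

def curvature (γ : ℝ → ℝ × ℝ) (u : ℝ) : ℝ :=
  dot2 (arcDeriv γ (tangentC γ) u) (normalC γ u)

def psiCurv (ψ : ℝ × ℝ → ℝ) (γ : ℝ → ℝ × ℝ) (u : ℝ) : ℝ :=
  curvature γ u - fderiv ℝ ψ (γ u) (normalC γ u)

def IsPsiMinimal (ψ : ℝ × ℝ → ℝ) (γ : ℝ → ℝ × ℝ) : Prop :=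
  ∀ u, psiCurv ψ γ u = 0

def signedArea (γ : ℝ → ℝ × ℝ) : ℝ :=
  (1/2) * ∫ u in (0:ℝ)..(2*π), ((γ u).1 * (deriv γ u).2 - (γ u).2 * (deriv γ u).1)

def turningNumber (γ : ℝ → ℝ × ℝ) : ℝ :=
  (1/(2*π)) * ∫ u in (0:ℝ)..(2*π), curvature γ u * nrm2 (deriv γ u)

def windingNumber (γ : ℝ → ℝ × ℝ) : ℝ :=
  (1/(2*π)) * ∫ u in (0:ℝ)..(2*π),
    ((γ u).1 * (deriv γ u).2 - (γ u).2 * (deriv γ u).1) / (nrm2 (γ u))^2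

def hess2 (ψ : ℝ × ℝ → ℝ) (x v : ℝ × ℝ) : ℝ :=
  fderiv ℝ (fun y => fderiv ℝ ψ y v) x v

def SmoothFamily (γ : ℝ → ℝ → ℝ × ℝ) : Prop :=
  ContDiff ℝ (⊤ : ℕ∞) fun p : ℝ × ℝ => γ p.1 p.2

/-!
Under a normal variation with speed `φ` the frame and the curvature evolve by `∂ₜT = φₛ N`,
`∂ₜN = -φₛ T` and `∂ₜk = φₛₛ + k² φ`. For `φ = k_ψ` this yields
`∂ₜk_ψ = (k_ψ)ₛₛ + ⟨∇ψ, T⟩ (k_ψ)ₛ + k_ψ (k² - Hess ψ(N, N))`. At a spatial minimum the derivative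
terms are nonnegative. If the minimum lies `δ` below `C = P₁ + √P₂`, then `k ≥ k_ψ - P₁ = √P₂ - δ`,
hence `k² - Hess ψ(N, N) ≥ -2√P₂ δ`, and the reaction term is at least `-K δ` for a constant `K`
depending only on `P₁`, `P₂` and a bound on `|k|`. The minimum principle then keeps `k_ψ` above `C`.
-/

open Filter Topology ContDiff

section MinimumPrinciple

lemma deriv_nonpos_of_forall_Ico_le {f : ℝ → ℝ} {f' a t : ℝ} (hat : a < t)
    (hf : HasDerivAt f f' t) (hmin : ∀ s ∈ Ico a t, f t ≤ f s) : f' ≤ 0 := by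
  have hlocal : IsLocalMinOn f (Iic t) t := by
    filter_upwards [Ioc_mem_nhdsLE hat] with s hs
    rcases hs.2.eq_or_lt with rfl | hst
    · exact le_rfl
    · exact hmin s ⟨hs.1.le, hst⟩
  have hcone : (t - 1) - t ∈ posTangentConeAt (Iic t) t :=
    sub_mem_posTangentConeAt_of_segment_subset <|
      (convex_Iic t).segment_subset self_mem_Iic (by simp)
  simpa using hlocal.hasFDerivWithinAt_nonneg hf.hasDerivWithinAt.hasFDerivWithinAt hcone

variable {X : Type*} [TopologicalSpace X] [CompactSpace X] {a b : ℝ}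

lemma exists_first_time_nonpos {w : ℝ → X → ℝ} (hw : ContinuousOn ↿w (Icc a b ×ˢ univ))
    (hinit : ∀ x, 0 < w a x) (hnonpos : ∃ t ∈ Icc a b, ∃ x, w t x ≤ 0) :
    ∃ t ∈ Ioc a b, (∃ x, w t x ≤ 0) ∧ ∀ s ∈ Ico a t, ∀ x, 0 < w s x := by
  have hcompact : IsCompact (Icc a b ×ˢ (univ : Set X)) := isCompact_Icc.prod isCompact_univ
  have hclosed : IsClosed (Icc a b ×ˢ (univ : Set X) ∩ ↿w ⁻¹' Iic 0) :=
    hw.preimage_isClosed_of_isClosed (isClosed_Icc.prod isClosed_univ) isClosed_Iic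
  obtain ⟨t₁, ht₁, x₁, hx₁⟩ := hnonpos
  obtain ⟨⟨t, x⟩, ⟨⟨ht, -⟩, hx⟩, hmin⟩ :=
    (hcompact.of_isClosed_subset hclosed inter_subset_left).exists_isMinOn
      ⟨(t₁, x₁), ⟨ht₁, mem_univ _⟩, hx₁⟩ continuous_fst.continuousOn
  have hat : a ≠ t := fun h => (hinit x).not_ge (h ▸ hx)
  refine ⟨t, ⟨ht.1.lt_of_ne hat, ht.2⟩, ⟨x, hx⟩, fun s hs y => not_le.1 fun hy => ?_⟩
  have hts : t ≤ s := hmin (a := (s, y)) ⟨⟨⟨hs.1, hs.2.le.trans ht.2⟩, mem_univ _⟩, hy⟩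
  exact hts.not_gt hs.2

lemma forall_pos_of_deriv_pos_at_zero_min {w : ℝ → X → ℝ}
    (hw : ContinuousOn ↿w (Icc a b ×ˢ univ)) (hinit : ∀ x, 0 < w a x)
    (hderiv : ∀ t ∈ Ioc a b, ∀ x, w t x = 0 → (∀ y, 0 ≤ w t y) →
      ∃ d > 0, HasDerivAt (fun τ => w τ x) d t) :
    ∀ t ∈ Icc a b, ∀ x, 0 < w t x := by
  by_contra! hnonpos
  obtain ⟨t, ht, ⟨x, hx⟩, hbefore⟩ := exists_first_time_nonpos hw hinit hnonpos
  have hnonneg : ∀ y, 0 ≤ w t y := by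
    intro y
    have hcont : ContinuousWithinAt (fun s => w s y) (Ico a t) t :=
      (hw (t, y) ⟨Ioc_subset_Icc_self ht, mem_univ _⟩).comp (f := fun s => (s, y)) (by fun_prop)
        fun s hs => ⟨⟨hs.1, hs.2.le.trans ht.2⟩, mem_univ _⟩
    have hclosure : t ∈ closure (Ico a t) := by
      rw [closure_Ico ht.1.ne]
      exact right_mem_Icc.2 ht.1.le
    exact continuousWithinAt_const.closure_le hclosure hcont fun s hs => (hbefore s hs y).le
  obtain ⟨d, hd, hwd⟩ := hderiv t ht x (hx.antisymm (hnonneg x)) hnonneg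
  exact hd.not_ge <|
    deriv_nonpos_of_forall_Ico_le ht.1 hwd fun s hs => hx.trans (hbefore s hs x).le

-- The barrier `C - ε e^{(K + 1) t}` turns the non-strict differential inequality into a strict one.
theorem forall_ge_of_deriv_ge_at_min {F : ℝ → X → ℝ} {C K : ℝ}
    (hF : ContinuousOn ↿F (Icc a b ×ˢ univ)) (hinit : ∀ x, C ≤ F a x)
    (hderiv : ∀ t ∈ Ioc a b, ∀ x, F t x < C → (∀ y, F t x ≤ F t y) →
      ∃ d ≥ K * (F t x - C), HasDerivAt (fun τ => F τ x) d t) :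
    ∀ t ∈ Icc a b, ∀ x, C ≤ F t x := by
  have hbarrier : ∀ ε > 0, ∀ t ∈ Icc a b, ∀ x, 0 < F t x - C + ε * exp ((K + 1) * t) := by
    intro ε hε
    refine forall_pos_of_deriv_pos_at_zero_min ?_ ?_ ?_
    · exact (hF.sub continuousOn_const).add
        (Continuous.continuousOn (f := fun p : ℝ × X => ε * exp ((K + 1) * p.1)) (by fun_prop))
    · intro x
      have := hinit x
      have : 0 < ε * exp ((K + 1) * a) := by positivity
      linarith
    · intro t ht x hzero hnonneg
      have hpos : 0 < ε * exp ((K + 1) * t) := by positivity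
      obtain ⟨d, hd, hFd⟩ := hderiv t ht x (by linarith) fun y => by linarith [hnonneg y]
      have hexp :
          HasDerivAt (fun τ => ε * exp ((K + 1) * τ)) (ε * exp ((K + 1) * t) * (K + 1)) t := by
        simpa [mul_assoc] using (((hasDerivAt_id t).const_mul (K + 1)).exp).const_mul ε
      refine ⟨d + ε * exp ((K + 1) * t) * (K + 1), ?_, (hFd.sub_const C).add hexp⟩
      have hFC : F t x - C = -(ε * exp ((K + 1) * t)) := by linarith
      rw [hFC] at hd
      linarith
  intro t ht x
  refine le_of_forall_pos_le_add fun η hη => ?_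
  have h := hbarrier (η / exp ((K + 1) * t)) (by positivity) t ht x
  rw [div_mul_cancel₀ _ (exp_pos _).ne'] at h
  linarith

end MinimumPrinciple

section Periodic

variable {a b L : ℝ}

lemma forall_of_forall_mem_Icc_of_periodic {α : Type*} {f : ℝ → α} (hL : 0 < L)
    (hf : Function.Periodic f L) {p : α → Prop} (hp : ∀ u ∈ Icc 0 L, p (f u)) (u : ℝ) :
    p (f u) := by
  obtain ⟨v, hv, hfv⟩ := hf.exists_mem_Ico₀ hL u
  exact hfv ▸ hp v (Ico_subset_Icc_self hv)

lemma exists_norm_le_of_periodic {E : Type*} [NormedAddCommGroup E] {F : ℝ → ℝ → E} (hL : 0 < L)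
    (hF : ContinuousOn ↿F (Icc a b ×ˢ univ)) (hper : ∀ t ∈ Icc a b, Function.Periodic (F t) L) :
    ∃ B, ∀ t ∈ Icc a b, ∀ u, ‖F t u‖ ≤ B := by
  have hcompact : IsCompact (Icc a b ×ˢ Icc 0 L) := isCompact_Icc.prod isCompact_Icc
  obtain ⟨B, hB⟩ :=
    hcompact.exists_bound_of_continuousOn (hF.mono (prod_mono_right (subset_univ _)))
  exact ⟨B, fun t ht => forall_of_forall_mem_Icc_of_periodic (p := fun y => ‖y‖ ≤ B) hL
    (hper t ht) fun u hu => hB (t, u) ⟨ht, hu⟩⟩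

theorem forall_ge_of_deriv_ge_at_min_of_periodic {F : ℝ → ℝ → ℝ} {C K : ℝ} (hL : 0 < L)
    (hF : ContinuousOn ↿F (Icc a b ×ˢ univ)) (hper : ∀ t ∈ Icc a b, Function.Periodic (F t) L)
    (hinit : ∀ u, C ≤ F a u)
    (hderiv : ∀ t ∈ Ioc a b, ∀ u, F t u < C → (∀ v, F t u ≤ F t v) →
      ∃ d ≥ K * (F t u - C), HasDerivAt (fun τ => F τ u) d t) :
    ∀ t ∈ Icc a b, ∀ u, C ≤ F t u := by
  have hcont : ContinuousOn ↿(fun t (x : Icc (0 : ℝ) L) => F t x) (Icc a b ×ˢ univ) :=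
    hF.comp (f := fun q : ℝ × Icc (0 : ℝ) L => (q.1, (q.2 : ℝ))) (by fun_prop)
      fun q hq => ⟨hq.1, mem_univ _⟩
  have hIcc := forall_ge_of_deriv_ge_at_min hcont (fun x => hinit x) fun t ht x hlt hmin =>
    hderiv t ht x hlt <| forall_of_forall_mem_Icc_of_periodic (p := fun y => F t x ≤ y) hL
      (hper t (Ioc_subset_Icc_self ht)) fun v hv => hmin ⟨v, hv⟩
  exact fun t ht => forall_of_forall_mem_Icc_of_periodic (p := fun y => C ≤ y) hL (hper t ht)
    fun u hu => hIcc t ht ⟨u, hu⟩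

end Periodic

section MixedPartials

variable {E : Type*} [NormedAddCommGroup E] [NormedSpace ℝ E] {f : ℝ → ℝ → E} {t u : ℝ}

lemma hasDerivAt_left (hf : DifferentiableAt ℝ ↿f (t, u)) :
    HasDerivAt (fun τ => f τ u) (fderiv ℝ ↿f (t, u) (1, 0)) t :=
  hf.hasFDerivAt.comp_hasDerivAt (f := fun τ => (τ, u)) t
    ((hasDerivAt_id t).prodMk (hasDerivAt_const t u))

lemma hasDerivAt_right (hf : DifferentiableAt ℝ ↿f (t, u)) :
    HasDerivAt (f t) (fderiv ℝ ↿f (t, u) (0, 1)) u :=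
  hf.hasFDerivAt.comp_hasDerivAt u ((hasDerivAt_const u t).prodMk (hasDerivAt_id u))

lemma contDiffAt_right {n : ℕ∞ω} (hf : ContDiffAt ℝ n ↿f (t, u)) : ContDiffAt ℝ n (f t) u :=
  hf.comp u (contDiffAt_const.prodMk contDiffAt_id)

lemma eventually_differentiableAt (hf : ContDiffAt ℝ ∞ ↿f (t, u)) :
    ∀ᶠ q in 𝓝 (t, u), DifferentiableAt ℝ ↿f q := by
  filter_upwards [(hf.of_le (m := 1) (by simp)).eventually (by simp)] with q hq
  exact hq.differentiableAt (by simp)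

lemma contDiffAt_fderiv (hf : ContDiffAt ℝ ∞ ↿f (t, u)) : ContDiffAt ℝ ∞ (fderiv ℝ ↿f) (t, u) :=
  hf.fderiv_right (by simp)

lemma contDiffAt_deriv_right (hf : ContDiffAt ℝ ∞ ↿f (t, u)) :
    ContDiffAt ℝ ∞ ↿(fun τ => deriv (f τ)) (t, u) := by
  have hsmooth : ContDiffAt ℝ ∞ (fun q => fderiv ℝ ↿f q (0, 1)) (t, u) :=
    (contDiffAt_fderiv hf).clm_apply contDiffAt_const
  refine hsmooth.congr_of_eventuallyEq ?_
  filter_upwards [eventually_differentiableAt hf] with q hq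
  exact (hasDerivAt_right hq).deriv

lemma hasDerivAt_deriv_right (hf : ContDiffAt ℝ ∞ ↿f (t, u)) :
    HasDerivAt (fun τ => deriv (f τ) u) (deriv (fun v => deriv (fun τ => f τ v) t) u) t := by
  have hf' : DifferentiableAt ℝ (fderiv ℝ ↿f) (t, u) :=
    (contDiffAt_fderiv hf).differentiableAt (by simp)
  have hsymm : IsSymmSndFDerivAt ℝ ↿f (t, u) :=
    hf.isSymmSndFDerivAt (by simpa using WithTop.coe_le_coe.2 (le_top (a := (2 : ℕ∞))))
  have hleft : Tendsto (fun τ : ℝ => (τ, u)) (𝓝 t) (𝓝 (t, u)) :=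
    Continuous.tendsto' (by fun_prop) _ _ rfl
  have hright : Tendsto (fun v : ℝ => (t, v)) (𝓝 u) (𝓝 (t, u)) :=
    Continuous.tendsto' (by fun_prop) _ _ rfl
  have hu : (fun τ => deriv (f τ) u) =ᶠ[𝓝 t] fun τ => fderiv ℝ ↿f (τ, u) (0, 1) := by
    filter_upwards [hleft.eventually (eventually_differentiableAt hf)] with τ hτ
    exact (hasDerivAt_right hτ).deriv
  have ht : (fun v => deriv (fun τ => f τ v) t) =ᶠ[𝓝 u] fun v => fderiv ℝ ↿f (t, v) (1, 0) := by
    filter_upwards [hright.eventually (eventually_differentiableAt hf)] with v hv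
    exact (hasDerivAt_left hv).deriv
  have hut := (hasDerivAt_left (f := fun τ v => fderiv ℝ ↿f (τ, v)) hf').clm_apply
    (hasDerivAt_const t ((0, 1) : ℝ × ℝ))
  have htu := (hasDerivAt_right (f := fun τ v => fderiv ℝ ↿f (τ, v)) hf').clm_apply
    (hasDerivAt_const u ((1, 0) : ℝ × ℝ))
  rw [ht.deriv_eq, htu.deriv]
  refine (hut.congr_of_eventuallyEq hu).congr_deriv ?_
  rw [map_zero, add_zero, add_zero]
  exact hsymm (1, 0) (0, 1)

end MixedPartials

section EuclideanPlane

lemma dot2_self (v : ℝ × ℝ) : dot2 v v = nrm2 v ^ 2 := by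
  rw [nrm2, sq_sqrt (by positivity), dot2]
  ring

lemma nrm2_pos {v : ℝ × ℝ} (hv : v ≠ 0) : 0 < nrm2 v := by
  refine sqrt_pos.2 (lt_of_le_of_ne (by positivity) fun h => hv ?_)
  ext
  · rw [Prod.fst_zero]
    nlinarith
  · rw [Prod.snd_zero]
    nlinarith

lemma abs_dot2_le (v w : ℝ × ℝ) : |dot2 v w| ≤ nrm2 v * nrm2 w := by
  refine abs_le_of_sq_le_sq ?_ (mul_nonneg (sqrt_nonneg _) (sqrt_nonneg _))
  rw [mul_pow, ← dot2_self, ← dot2_self]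
  simp only [dot2]
  linarith [sq_nonneg (v.1 * w.2 - v.2 * w.1)]

lemma dot2_smul_left (r : ℝ) (v w : ℝ × ℝ) : dot2 (r • v) w = r * dot2 v w := by
  simp only [dot2, Prod.smul_fst, Prod.smul_snd, smul_eq_mul]
  ring

lemma dot2_smul_right (r : ℝ) (v w : ℝ × ℝ) : dot2 v (r • w) = r * dot2 v w := by
  simp only [dot2, Prod.smul_fst, Prod.smul_snd, smul_eq_mul]
  ring

lemma nrm2_smul (r : ℝ) (v : ℝ × ℝ) : nrm2 (r • v) = |r| * nrm2 v := by
  rw [nrm2, nrm2, ← sqrt_sq_eq_abs, ← sqrt_mul (sq_nonneg r)]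
  congr 1
  simp only [Prod.smul_fst, Prod.smul_snd, smul_eq_mul]
  ring

lemma nrm2_Jrot (v : ℝ × ℝ) : nrm2 (Jrot v) = nrm2 v := by
  simp only [nrm2, Jrot, neg_sq, add_comm]

lemma dot2_Jrot_self (v : ℝ × ℝ) : dot2 (Jrot v) v = 0 := by
  simp only [dot2, Jrot]
  ring

lemma Jrot_Jrot (v : ℝ × ℝ) : Jrot (Jrot v) = -v := rfl

lemma Jrot_smul (r : ℝ) (v : ℝ × ℝ) : Jrot (r • v) = r • Jrot v := by
  simp [Jrot]

lemma eq_dot2_smul_add_dot2_smul_Jrot {e : ℝ × ℝ} (he : nrm2 e = 1) (v : ℝ × ℝ) :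
    v = dot2 v e • e + dot2 v (Jrot e) • Jrot e := by
  have he : dot2 e e = 1 := by rw [dot2_self, he, one_pow]
  simp only [dot2] at he
  ext
  · simp only [dot2, Jrot, Prod.fst_add, Prod.smul_fst, smul_eq_mul]
    linear_combination -v.1 * he
  · simp only [dot2, Jrot, Prod.snd_add, Prod.smul_snd, smul_eq_mul]
    linear_combination -v.2 * he

lemma apply_eq_dot2 (L : ℝ × ℝ →L[ℝ] ℝ) (v : ℝ × ℝ) : L v = dot2 (L (1, 0), L (0, 1)) v := by
  have hv : v = v.1 • ((1, 0) : ℝ × ℝ) + v.2 • ((0, 1) : ℝ × ℝ) := by simp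
  conv_lhs => rw [hv, map_add, map_smul, map_smul, smul_eq_mul, smul_eq_mul]
  simp only [dot2]
  ring

lemma contDiff_Jrot {n : ℕ∞ω} : ContDiff ℝ n Jrot := by
  unfold Jrot
  fun_prop

lemma contDiff_dot2 {n : ℕ∞ω} : ContDiff ℝ n fun p : (ℝ × ℝ) × ℝ × ℝ => dot2 p.1 p.2 := by
  unfold dot2
  fun_prop

lemma contDiffAt_nrm2 {n : ℕ∞ω} {v : ℝ × ℝ} (hv : v ≠ 0) : ContDiffAt ℝ n nrm2 v :=
  ContDiffAt.sqrt (by fun_prop) (sqrt_pos.1 (nrm2_pos hv)).ne'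

variable {v w : ℝ → ℝ × ℝ} {v' w' : ℝ × ℝ} {x : ℝ}

lemma hasDerivAt_fst_comp (hv : HasDerivAt v v' x) : HasDerivAt (fun y => (v y).1) v'.1 x :=
  (ContinuousLinearMap.fst ℝ ℝ ℝ).hasFDerivAt.comp_hasDerivAt x hv

lemma hasDerivAt_snd_comp (hv : HasDerivAt v v' x) : HasDerivAt (fun y => (v y).2) v'.2 x :=
  (ContinuousLinearMap.snd ℝ ℝ ℝ).hasFDerivAt.comp_hasDerivAt x hv

lemma hasDerivAt_Jrot (hv : HasDerivAt v v' x) : HasDerivAt (fun y => Jrot (v y)) (Jrot v') x :=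
  (hasDerivAt_snd_comp hv).neg.prodMk (hasDerivAt_fst_comp hv)

lemma hasDerivAt_dot2 (hv : HasDerivAt v v' x) (hw : HasDerivAt w w' x) :
    HasDerivAt (fun y => dot2 (v y) (w y)) (dot2 v' (w x) + dot2 (v x) w') x := by
  refine (((hasDerivAt_fst_comp hv).mul (hasDerivAt_fst_comp hw)).add
    ((hasDerivAt_snd_comp hv).mul (hasDerivAt_snd_comp hw))).congr_deriv ?_
  simp only [dot2]
  ring

lemma hasDerivAt_nrm2 (hv : HasDerivAt v v' x) (hx : v x ≠ 0) :
    HasDerivAt (fun y => nrm2 (v y)) ((nrm2 (v x))⁻¹ * dot2 v' (v x)) x := by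
  have hpos : 0 < (v x).1 ^ 2 + (v x).2 ^ 2 := sqrt_pos.1 (nrm2_pos hx)
  refine (((hasDerivAt_fst_comp hv).pow 2).add
    ((hasDerivAt_snd_comp hv).pow 2)).sqrt hpos.ne' |>.congr_deriv ?_
  simp only [Pi.add_apply, Pi.pow_apply, dot2, nrm2]
  field_simp
  push_cast
  ring

lemma dot2_deriv_self_eq_zero (hv : HasDerivAt v v' x) (hunit : ∀ y, nrm2 (v y) = 1) :
    dot2 v' (v x) = 0 := by
  have hsq : HasDerivAt (fun y => dot2 (v y) (v y)) 0 x := by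
    simpa only [dot2_self, hunit] using hasDerivAt_const x ((1 : ℝ) ^ 2)
  have h := (hasDerivAt_dot2 hv hv).unique hsq
  simp only [dot2] at h ⊢
  linarith

end EuclideanPlane

lemma deriv_deriv_nonneg_of_isLocalMin {f : ℝ → ℝ} {x : ℝ} (hf : ContinuousAt f x)
    (hmin : IsLocalMin f x) : 0 ≤ deriv (deriv f) x := by
  by_contra! hneg
  have hmax : IsLocalMax f x := isLocalMax_of_deriv_deriv_neg hneg hmin.deriv_eq_zero hf
  have hconst : f =ᶠ[𝓝 x] fun _ => f x := by
    filter_upwards [hmax, hmin] with y hle hge using le_antisymm hle hge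
  have hzero : deriv (deriv f) x = 0 := by simpa using hconst.deriv.deriv_eq
  exact hneg.ne hzero

section ArcDerivative

variable {E : Type*} [NormedAddCommGroup E] [NormedSpace ℝ E]

lemma contDiffAt_arcDeriv {γ : ℝ → ℝ → ℝ × ℝ} {h : ℝ → ℝ → E} {t u : ℝ}
    (hγ : ContDiffAt ℝ ∞ ↿γ (t, u)) (hh : ContDiffAt ℝ ∞ ↿h (t, u)) (hreg : deriv (γ t) u ≠ 0) :
    ContDiffAt ℝ ∞ ↿(fun τ => arcDeriv (γ τ) (h τ)) (t, u) := by
  have hspeed : ContDiffAt ℝ ∞ (fun q : ℝ × ℝ => nrm2 (deriv (γ q.1) q.2)) (t, u) :=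
    ContDiffAt.comp (g := nrm2) (f := fun q : ℝ × ℝ => deriv (γ q.1) q.2) (t, u)
      (contDiffAt_nrm2 hreg) (contDiffAt_deriv_right hγ)
  exact (hspeed.inv (nrm2_pos hreg).ne').smul (contDiffAt_deriv_right hh)

lemma hasDerivAt_smul_arcDeriv {c : ℝ → ℝ × ℝ} {h : ℝ → E} {u : ℝ} (hreg : deriv c u ≠ 0)
    (hh : DifferentiableAt ℝ h u) : HasDerivAt h (nrm2 (deriv c u) • arcDeriv c h u) u := by
  rw [arcDeriv, smul_inv_smul₀ (nrm2_pos hreg).ne']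
  exact hh.hasDerivAt

lemma arcDeriv_eq_zero_of_isLocalMin {c : ℝ → ℝ × ℝ} {h : ℝ → ℝ} {u : ℝ} (hmin : IsLocalMin h u) :
    arcDeriv c h u = 0 := by
  rw [arcDeriv, hmin.deriv_eq_zero, smul_zero]

lemma periodic_deriv {f : ℝ → E} {L : ℝ}
    (hf : Function.Periodic f L) : Function.Periodic (deriv f) L := fun u => by
  rw [← deriv_comp_add_const, funext hf]

lemma periodic_arcDeriv {c : ℝ → ℝ × ℝ}
    {h : ℝ → E} {L : ℝ} (hc : Function.Periodic c L) (hh : Function.Periodic h L) :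
    Function.Periodic (arcDeriv c h) L := fun u => by
  rw [arcDeriv, arcDeriv, periodic_deriv hc, periodic_deriv hh]

end ArcDerivative

/-- A smooth immersed plane curve, not necessarily closed: the setting of the Frenet equations. -/
structure IsRegularCurve (c : ℝ → ℝ × ℝ) : Prop where
  smooth : ContDiff ℝ ∞ c
  regular : ∀ u, deriv c u ≠ 0

namespace IsRegularCurve

variable {c : ℝ → ℝ × ℝ}

lemma contDiff_arcDeriv {E : Type*} [NormedAddCommGroup E] [NormedSpace ℝ E] {h : ℝ → E}
    (hc : IsRegularCurve c) (hh : ContDiff ℝ ∞ h) : ContDiff ℝ ∞ (arcDeriv c h) := by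
  refine contDiff_iff_contDiffAt.2 fun u =>
    contDiffAt_right (f := fun _ : ℝ => arcDeriv c h) (t := 0) ?_
  exact contDiffAt_arcDeriv (γ := fun _ => c) (h := fun _ => h)
    (hc.smooth.comp contDiff_snd).contDiffAt (hh.comp contDiff_snd).contDiffAt (hc.regular u)

lemma contDiff_tangentC (hc : IsRegularCurve c) : ContDiff ℝ ∞ (tangentC c) :=
  hc.contDiff_arcDeriv hc.smooth

lemma nrm2_tangentC (hc : IsRegularCurve c) (u : ℝ) : nrm2 (tangentC c u) = 1 := by
  have hpos := nrm2_pos (hc.regular u)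
  rw [tangentC, nrm2_smul, abs_of_pos (inv_pos.2 hpos), inv_mul_cancel₀ hpos.ne']

lemma nrm2_normalC (hc : IsRegularCurve c) (u : ℝ) : nrm2 (normalC c u) = 1 := by
  rw [normalC, nrm2_Jrot, hc.nrm2_tangentC]

lemma arcDeriv_tangentC (hc : IsRegularCurve c) (u : ℝ) :
    arcDeriv c (tangentC c) u = curvature c u • normalC c u := by
  have horth : dot2 (arcDeriv c (tangentC c) u) (tangentC c u) = 0 := by
    have hT := (hc.contDiff_tangentC.differentiable (by simp) u).hasDerivAt
    rw [arcDeriv, dot2_smul_left, dot2_deriv_self_eq_zero hT hc.nrm2_tangentC, mul_zero]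
  have h := eq_dot2_smul_add_dot2_smul_Jrot (hc.nrm2_tangentC u) (arcDeriv c (tangentC c) u)
  rwa [horth, zero_smul, zero_add] at h

lemma hasDerivAt_tangentC (hc : IsRegularCurve c) (u : ℝ) :
    HasDerivAt (tangentC c) ((nrm2 (deriv c u) * curvature c u) • normalC c u) u := by
  rw [mul_smul, ← hc.arcDeriv_tangentC]
  exact hasDerivAt_smul_arcDeriv (hc.regular u) (hc.contDiff_tangentC.differentiable (by simp) u)

lemma hasDerivAt_normalC (hc : IsRegularCurve c) (u : ℝ) :
    HasDerivAt (normalC c) (-(nrm2 (deriv c u) * curvature c u) • tangentC c u) u := by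
  refine (hasDerivAt_Jrot (hc.hasDerivAt_tangentC u)).congr_deriv ?_
  rw [Jrot_smul, normalC, Jrot_Jrot, smul_neg, neg_smul]

lemma arcDeriv_smul_normalC (hc : IsRegularCurve c) {g : ℝ → ℝ} {u : ℝ}
    (hg : DifferentiableAt ℝ g u) :
    arcDeriv c (fun v => g v • normalC c v) u =
      arcDeriv c g u • normalC c u - (g u * curvature c u) • tangentC c u := by
  have hpos := nrm2_pos (hc.regular u)
  rw [arcDeriv, (hg.hasDerivAt.fun_smul (hc.hasDerivAt_normalC u)).deriv, arcDeriv, smul_eq_mul]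
  match_scalars <;> field_simp

lemma dot2_smul_normalC_add_smul_tangentC_tangentC (hc : IsRegularCurve c) (a b u : ℝ) :
    dot2 (a • normalC c u + b • tangentC c u) (tangentC c u) = b := by
  have h := dot2_self (tangentC c u)
  rw [hc.nrm2_tangentC] at h
  simp only [dot2, normalC, Jrot, Prod.fst_add, Prod.snd_add, Prod.smul_fst, Prod.smul_snd,
    smul_eq_mul] at h ⊢
  linear_combination b * h

lemma dot2_smul_normalC_add_smul_tangentC_normalC (hc : IsRegularCurve c) (a b u : ℝ) :
    dot2 (a • normalC c u + b • tangentC c u) (normalC c u) = a := by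
  have h := dot2_self (tangentC c u)
  rw [hc.nrm2_tangentC] at h
  simp only [dot2, normalC, Jrot, Prod.fst_add, Prod.snd_add, Prod.smul_fst, Prod.smul_snd,
    smul_eq_mul] at h ⊢
  linear_combination a * h

lemma arcDeriv_arcDeriv_nonneg_of_isLocalMin (hc : IsRegularCurve c) {h : ℝ → ℝ} {u : ℝ}
    (hh : ContDiff ℝ ∞ h) (hmin : IsLocalMin h u) : 0 ≤ arcDeriv c (arcDeriv c h) u := by
  have hpos := nrm2_pos (hc.regular u)
  have hh' : DifferentiableAt ℝ (deriv h) u :=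
    (contDiff_infty_iff_deriv.1 hh).2.differentiable (by simp) u
  have hc' : DifferentiableAt ℝ (deriv c) u :=
    (contDiff_infty_iff_deriv.1 hc.smooth).2.differentiable (by simp) u
  have hspeed := (hasDerivAt_nrm2 hc'.hasDerivAt (hc.regular u)).inv hpos.ne'
  have harc := (hspeed.smul hh'.hasDerivAt).deriv
  rw [hmin.deriv_eq_zero, smul_zero, add_zero] at harc
  change 0 ≤ (nrm2 (deriv c u))⁻¹ • deriv ((fun v => nrm2 (deriv c v))⁻¹ • deriv h) u
  rw [harc]
  have := deriv_deriv_nonneg_of_isLocalMin hh.continuous.continuousAt hmin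
  simp only [Pi.inv_apply, smul_eq_mul]
  positivity

end IsRegularCurve

/-- At time `t` the family `γ` moves in the normal direction with speed `φ`. The ψ-mean-curvature
flow is the case `φ = psiCurv ψ (γ t)`. -/
def HasNormalSpeed (γ : ℝ → ℝ → ℝ × ℝ) (t : ℝ) (φ : ℝ → ℝ) : Prop :=
  ∀ u, deriv (fun τ => γ τ u) t = φ u • normalC (γ t) u

lemma hess2_eq {ψ : ℝ × ℝ → ℝ} {x : ℝ × ℝ} (hψ : DifferentiableAt ℝ (fderiv ℝ ψ) x)
    (v : ℝ × ℝ) : hess2 ψ x v = fderiv ℝ (fderiv ℝ ψ) x v v := by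
  rw [hess2, fderiv_clm_apply hψ (differentiableAt_const v)]
  simp

namespace SmoothFamily

variable {γ : ℝ → ℝ → ℝ × ℝ} {t u : ℝ}

lemma contDiffAt (hγ : SmoothFamily γ) (t u : ℝ) : ContDiffAt ℝ ∞ ↿γ (t, u) :=
  ContDiff.contDiffAt hγ

lemma contDiffAt_tangentC (hγ : SmoothFamily γ) (hreg : deriv (γ t) u ≠ 0) :
    ContDiffAt ℝ ∞ ↿(fun τ => tangentC (γ τ)) (t, u) :=
  contDiffAt_arcDeriv (hγ.contDiffAt t u) (hγ.contDiffAt t u) hreg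

lemma contDiffAt_normalC (hγ : SmoothFamily γ) (hreg : deriv (γ t) u ≠ 0) :
    ContDiffAt ℝ ∞ ↿(fun τ => normalC (γ τ)) (t, u) :=
  contDiff_Jrot.contDiffAt.comp (t, u) (hγ.contDiffAt_tangentC hreg)

lemma contDiffAt_curvature (hγ : SmoothFamily γ) (hreg : deriv (γ t) u ≠ 0) :
    ContDiffAt ℝ ∞ ↿(fun τ => curvature (γ τ)) (t, u) :=
  contDiff_dot2.contDiffAt.comp (t, u)
    ((contDiffAt_arcDeriv (hγ.contDiffAt t u) (hγ.contDiffAt_tangentC hreg) hreg).prodMk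
      (hγ.contDiffAt_normalC hreg))

lemma contDiffAt_psiCurv {ψ : ℝ × ℝ → ℝ} (hψ : ContDiff ℝ ∞ ψ) (hγ : SmoothFamily γ)
    (hreg : deriv (γ t) u ≠ 0) : ContDiffAt ℝ ∞ ↿(fun τ => psiCurv ψ (γ τ)) (t, u) := by
  have hgrad : ContDiffAt ℝ ∞ (fun q : ℝ × ℝ => fderiv ℝ ψ (γ q.1 q.2)) (t, u) :=
    (hψ.fderiv_right (m := ∞) (by simp)).contDiffAt.comp (t, u) (hγ.contDiffAt t u)
  exact (hγ.contDiffAt_curvature hreg).sub (hgrad.clm_apply (hγ.contDiffAt_normalC hreg))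

end SmoothFamily

namespace HasNormalSpeed

variable {γ : ℝ → ℝ → ℝ × ℝ} {φ : ℝ → ℝ} {t : ℝ}

lemma hasDerivAt (hflow : HasNormalSpeed γ t φ) (hγ : SmoothFamily γ) (u : ℝ) :
    HasDerivAt (fun τ => γ τ u) (φ u • normalC (γ t) u) t := by
  rw [← hflow u]
  have hdiff := (hγ.contDiffAt t u).differentiableAt (by simp)
  exact (hasDerivAt_left hdiff).differentiableAt.hasDerivAt

lemma hasDerivAt_nrm2_deriv (hflow : HasNormalSpeed γ t φ) (hγ : SmoothFamily γ)
    (hc : IsRegularCurve (γ t)) (hφ : Differentiable ℝ φ) (u : ℝ) :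
    HasDerivAt (fun τ => nrm2 (deriv (γ τ) u))
      (-(φ u * curvature (γ t) u) * nrm2 (deriv (γ t) u)) t := by
  have hmixed : HasDerivAt (fun τ => deriv (γ τ) u)
      (deriv (fun v => φ v • normalC (γ t) v) u) t := by
    simpa only [hflow _] using hasDerivAt_deriv_right (hγ.contDiffAt t u)
  have htan : dot2 (arcDeriv (γ t) (fun v => φ v • normalC (γ t) v) u) (tangentC (γ t) u) =
      -(φ u * curvature (γ t) u) := by
    rw [hc.arcDeriv_smul_normalC (hφ u), sub_eq_add_neg, ← neg_smul,
      hc.dot2_smul_normalC_add_smul_tangentC_tangentC]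
  rw [arcDeriv, tangentC, dot2_smul_left, dot2_smul_right] at htan
  refine (hasDerivAt_nrm2 hmixed (hc.regular u)).congr_deriv ?_
  rw [← htan]
  field_simp

lemma hasDerivAt_arcDeriv {E : Type*} [NormedAddCommGroup E] [NormedSpace ℝ E] {h : ℝ → ℝ → E}
    (hflow : HasNormalSpeed γ t φ) (hγ : SmoothFamily γ)
    (hc : IsRegularCurve (γ t)) (hφ : Differentiable ℝ φ) {u : ℝ}
    (hh : ContDiffAt ℝ ∞ ↿h (t, u)) :
    HasDerivAt (fun τ => arcDeriv (γ τ) (h τ) u)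
      (arcDeriv (γ t) (fun v => deriv (fun τ => h τ v) t) u +
        (φ u * curvature (γ t) u) • arcDeriv (γ t) (h t) u) t := by
  have hpos := nrm2_pos (hc.regular u)
  refine (((hflow.hasDerivAt_nrm2_deriv hγ hc hφ u).inv hpos.ne').smul
    (hasDerivAt_deriv_right hh)).congr_deriv ?_
  simp only [arcDeriv, Pi.inv_apply]
  match_scalars <;> field_simp

lemma hasDerivAt_tangentC (hflow : HasNormalSpeed γ t φ) (hγ : SmoothFamily γ)
    (hc : IsRegularCurve (γ t)) (hφ : Differentiable ℝ φ) (u : ℝ) :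
    HasDerivAt (fun τ => tangentC (γ τ) u) (arcDeriv (γ t) φ u • normalC (γ t) u) t := by
  refine (hflow.hasDerivAt_arcDeriv hγ hc hφ (hγ.contDiffAt t u)).congr_deriv ?_
  simp only [hflow _]
  rw [hc.arcDeriv_smul_normalC (hφ u)]
  exact sub_add_cancel _ _

lemma hasDerivAt_normalC (hflow : HasNormalSpeed γ t φ) (hγ : SmoothFamily γ)
    (hc : IsRegularCurve (γ t)) (hφ : Differentiable ℝ φ) (u : ℝ) :
    HasDerivAt (fun τ => normalC (γ τ) u) (-arcDeriv (γ t) φ u • tangentC (γ t) u) t := by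
  refine (hasDerivAt_Jrot (hflow.hasDerivAt_tangentC hγ hc hφ u)).congr_deriv ?_
  rw [Jrot_smul, normalC, Jrot_Jrot, smul_neg, neg_smul]

lemma hasDerivAt_curvature (hflow : HasNormalSpeed γ t φ) (hγ : SmoothFamily γ)
    (hc : IsRegularCurve (γ t)) (hφ : ContDiff ℝ ∞ φ) (u : ℝ) :
    HasDerivAt (fun τ => curvature (γ τ) u)
      (arcDeriv (γ t) (arcDeriv (γ t) φ) u + curvature (γ t) u ^ 2 * φ u) t := by
  have hφ' : Differentiable ℝ φ := hφ.differentiable (by simp)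
  have hφs : Differentiable ℝ (arcDeriv (γ t) φ) :=
    (hc.contDiff_arcDeriv hφ).differentiable (by simp)
  have hTs : HasDerivAt (fun τ => arcDeriv (γ τ) (tangentC (γ τ)) u)
      ((arcDeriv (γ t) (arcDeriv (γ t) φ) u + curvature (γ t) u ^ 2 * φ u) • normalC (γ t) u +
        (-(arcDeriv (γ t) φ u * curvature (γ t) u)) • tangentC (γ t) u) t := by
    refine (hflow.hasDerivAt_arcDeriv hγ hc hφ'
      (hγ.contDiffAt_tangentC (hc.regular u))).congr_deriv ?_
    simp only [(hflow.hasDerivAt_tangentC hγ hc hφ' _).deriv]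
    rw [hc.arcDeriv_smul_normalC (hφs u), hc.arcDeriv_tangentC]
    module
  refine (hasDerivAt_dot2 hTs (hflow.hasDerivAt_normalC hγ hc hφ' u)).congr_deriv ?_
  have horth : dot2 (normalC (γ t) u) (tangentC (γ t) u) = 0 := dot2_Jrot_self _
  rw [hc.dot2_smul_normalC_add_smul_tangentC_normalC, hc.arcDeriv_tangentC, dot2_smul_left,
    dot2_smul_right, horth, mul_zero, mul_zero, add_zero]

lemma hasDerivAt_psiCurv {ψ : ℝ × ℝ → ℝ} (hψ : ContDiff ℝ ∞ ψ)
    (hflow : HasNormalSpeed γ t φ) (hγ : SmoothFamily γ)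
    (hc : IsRegularCurve (γ t)) (hφ : ContDiff ℝ ∞ φ) (u : ℝ) :
    HasDerivAt (fun τ => psiCurv ψ (γ τ) u)
      (arcDeriv (γ t) (arcDeriv (γ t) φ) u +
        arcDeriv (γ t) φ u * fderiv ℝ ψ (γ t u) (tangentC (γ t) u) +
        φ u * (curvature (γ t) u ^ 2 - hess2 ψ (γ t u) (normalC (γ t) u))) t := by
  have hψ' : DifferentiableAt ℝ (fderiv ℝ ψ) (γ t u) :=
    (hψ.fderiv_right (m := ∞) (by simp)).differentiable (by simp) _
  have hgrad : HasDerivAt (fun τ => fderiv ℝ ψ (γ τ u)) _ t :=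
    hψ'.hasFDerivAt.comp_hasDerivAt t (hflow.hasDerivAt hγ u)
  refine ((hflow.hasDerivAt_curvature hγ hc hφ u).sub (hgrad.clm_apply
    (hflow.hasDerivAt_normalC hγ hc (hφ.differentiable (by simp)) u))).congr_deriv ?_
  rw [hess2_eq hψ']
  simp only [map_smul, smul_eq_mul, smul_apply]
  ring

end HasNormalSpeed

lemma exists_hasDerivAt_psiCurv_ge_of_isLocalMin {ψ : ℝ × ℝ → ℝ} (hψ : ContDiff ℝ ∞ ψ)
    {γ : ℝ → ℝ → ℝ × ℝ} {t u : ℝ} (hγ : SmoothFamily γ) (hc : IsRegularCurve (γ t))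
    (hflow : HasNormalSpeed γ t (psiCurv ψ (γ t))) (hmin : IsLocalMin (psiCurv ψ (γ t)) u) :
    ∃ d ≥ psiCurv ψ (γ t) u * (curvature (γ t) u ^ 2 - hess2 ψ (γ t u) (normalC (γ t) u)),
      HasDerivAt (fun τ => psiCurv ψ (γ τ) u) d t := by
  have hsmooth : ContDiff ℝ ∞ (psiCurv ψ (γ t)) := contDiff_iff_contDiffAt.2 fun v =>
    contDiffAt_right (hγ.contDiffAt_psiCurv hψ (hc.regular v))
  refine ⟨_, ?_, hflow.hasDerivAt_psiCurv hψ hγ hc hsmooth u⟩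
  rw [arcDeriv_eq_zero_of_isLocalMin hmin, zero_mul, add_zero]
  exact le_add_of_nonneg_left (hc.arcDeriv_arcDeriv_nonneg_of_isLocalMin hsmooth hmin)

lemma psiCurv_sub_le_curvature {ψ : ℝ × ℝ → ℝ} {c : ℝ → ℝ × ℝ} (hc : IsRegularCurve c) {P u : ℝ}
    (hgrad : nrm2 (fderiv ℝ ψ (c u) (1, 0), fderiv ℝ ψ (c u) (0, 1)) ≤ P) :
    psiCurv ψ c u - P ≤ curvature c u := by
  have hle := abs_dot2_le (fderiv ℝ ψ (c u) (1, 0), fderiv ℝ ψ (c u) (0, 1)) (normalC c u)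
  rw [← apply_eq_dot2, hc.nrm2_normalC, mul_one] at hle
  rw [psiCurv]
  linarith [neg_le_of_abs_le hle]

/- With `f = k_ψ` and `H = Hess ψ(N, N)`, the right-hand side is the reaction term of the evolution
of `k_ψ`. -/
lemma mul_sub_le_mul_sq_sub {p q f k H B : ℝ} (hp : 0 ≤ p) (hf : f < p + √q)
    (hk : f - p ≤ k) (hkB : |k| ≤ B) (hH : |H| ≤ q) :
    (2 * (p + √q) * √q + B ^ 2 + q) * (f - (p + √q)) ≤ f * (k ^ 2 - H) := by
  have hq : √q ^ 2 = q := sq_sqrt ((abs_nonneg H).trans hH)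
  obtain ⟨hHlower, hHupper⟩ := abs_le.1 hH
  have hlower : 2 * √q * (f - (p + √q)) ≤ k ^ 2 - H := calc
    2 * √q * (f - (p + √q)) = 2 * √q * (f - p) - √q ^ 2 - q := by linear_combination -hq
    _ ≤ 2 * √q * k - √q ^ 2 - q := by gcongr
    _ ≤ k ^ 2 - q := by linarith [sq_nonneg (k - √q)]
    _ ≤ k ^ 2 - H := by gcongr
  have hupper : k ^ 2 - H ≤ B ^ 2 + q := by
    linarith [sq_le_sq.2 (hkB.trans (le_abs_self B))]
  have hbound : (p + √q) * (2 * √q * (f - (p + √q))) ≤ (p + √q) * (k ^ 2 - H) :=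
    mul_le_mul_of_nonneg_left hlower (by positivity)
  have hviolation : (p + √q - f) * (k ^ 2 - H) ≤ (p + √q - f) * (B ^ 2 + q) :=
    mul_le_mul_of_nonneg_left hupper (by linarith)
  linarith

namespace IsClosedCurve

variable {c : ℝ → ℝ × ℝ}

lemma isRegularCurve (hc : IsClosedCurve c) : IsRegularCurve c := ⟨hc.smooth, hc.regular⟩

lemma periodic_tangentC (hc : IsClosedCurve c) : Function.Periodic (tangentC c) (2 * π) :=
  periodic_arcDeriv hc.periodic hc.periodic

lemma periodic_normalC (hc : IsClosedCurve c) : Function.Periodic (normalC c) (2 * π) :=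
  hc.periodic_tangentC.comp Jrot

lemma periodic_curvature (hc : IsClosedCurve c) : Function.Periodic (curvature c) (2 * π) :=
  fun u => by
  rw [curvature, curvature, hc.periodic_normalC,
    periodic_arcDeriv hc.periodic hc.periodic_tangentC]

lemma periodic_psiCurv (ψ : ℝ × ℝ → ℝ) (hc : IsClosedCurve c) :
    Function.Periodic (psiCurv ψ c) (2 * π) := fun u => by
  rw [psiCurv, psiCurv, hc.periodic_curvature, hc.periodic_normalC, hc.periodic]

end IsClosedCurve

/-- a lower bound k_ψ ≥ P₁ + √P₂ on the ψ-curvature is preserved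
under ψMCF, for ψ smooth on ℝ² with |∇ψ| ≤ P₁ and ‖Hess ψ‖ ≤ P₂. -/
theorem psiCurvature_lower_bound_preserved
    (ψ : ℝ × ℝ → ℝ) (hψ : ContDiff ℝ (⊤ : ℕ∞) ψ)
    (P₁ P₂ : ℝ) (hP₁ : 0 ≤ P₁) (hP₂ : 0 ≤ P₂)
    (hgrad : ∀ x : ℝ × ℝ,
      nrm2 (fderiv ℝ ψ x (1, 0), fderiv ℝ ψ x (0, 1)) ≤ P₁)
    (hhess : ∀ x v w : ℝ × ℝ,
      |fderiv ℝ (fun y => fderiv ℝ ψ y w) x v| ≤ P₂ * nrm2 v * nrm2 w)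
    (T : ℝ) (hT : 0 < T) (γ : ℝ → ℝ → ℝ × ℝ)
    (hfam : SmoothFamily γ)
    (hclosed : ∀ t ∈ Set.Ico (0:ℝ) T, IsClosedCurve (γ t))
    (hflow : ∀ t ∈ Set.Ico (0:ℝ) T, ∀ u : ℝ,
      deriv (fun τ => γ τ u) t = psiCurv ψ (γ t) u • normalC (γ t) u)
    (hinit : ∀ u : ℝ, P₁ + Real.sqrt P₂ ≤ psiCurv ψ (γ 0) u) :
    ∀ t ∈ Set.Ico (0:ℝ) T, ∀ u : ℝ,
      P₁ + Real.sqrt P₂ ≤ psiCurv ψ (γ t) u := by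
  intro t₁ ht₁
  have hsub : Icc 0 t₁ ⊆ Ico 0 T := Icc_subset_Ico_right ht₁.2
  have hcurve : ∀ t ∈ Icc 0 t₁, IsRegularCurve (γ t) :=
    fun t ht => (hclosed t (hsub ht)).isRegularCurve
  have hcurv : ContinuousOn ↿(fun t => curvature (γ t)) (Icc 0 t₁ ×ˢ univ) := fun q hq =>
    (hfam.contDiffAt_curvature ((hcurve q.1 hq.1).regular q.2)).continuousAt.continuousWithinAt
  have hpsi : ContinuousOn ↿(fun t => psiCurv ψ (γ t)) (Icc 0 t₁ ×ˢ univ) := fun q hq =>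
    (hfam.contDiffAt_psiCurv hψ ((hcurve q.1 hq.1).regular q.2)).continuousAt.continuousWithinAt
  obtain ⟨B, hB⟩ := exists_norm_le_of_periodic two_pi_pos hcurv
    fun t ht => (hclosed t (hsub ht)).periodic_curvature
  refine forall_ge_of_deriv_ge_at_min_of_periodic (K := 2 * (P₁ + √P₂) * √P₂ + B ^ 2 + P₂)
    two_pi_pos hpsi (fun t ht => (hclosed t (hsub ht)).periodic_psiCurv ψ) hinit
    (fun t ht u hlt hmin => ?_) t₁ (right_mem_Icc.2 ht₁.1)
  have ht' := Ioc_subset_Icc_self ht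
  obtain ⟨d, hd, hderiv⟩ := exists_hasDerivAt_psiCurv_ge_of_isLocalMin hψ hfam (hcurve t ht')
    (hflow t (hsub ht')) (Eventually.of_forall hmin)
  have hH : |hess2 ψ (γ t u) (normalC (γ t) u)| ≤ P₂ := by
    simpa only [hess2, (hcurve t ht').nrm2_normalC, mul_one] using
      hhess (γ t u) (normalC (γ t) u) (normalC (γ t) u)
  exact ⟨d, hd.trans' (mul_sub_le_mul_sq_sub hP₁ hlt
    (psiCurv_sub_le_curvature (hcurve t ht') (hgrad _)) (hB t ht' u) hH), hderiv⟩
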